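/- arXiv:1703.00145 — 6 statements merged into one kernel-verified Lean document; each statement's English description precedes it below -/
import Mathlib

section
/- Let (X,d) be a bicomplete T0-quasi-metric space and J : X → X a single-valued map continuous with respect to d^s such that r·d(x,y) ≤ d(Jx,Jy) for all x,y ∈ X, for some constant r > 0. Let F : X → CB(X) be a set-valued map satisfying H(Fx,Fy) ≤ α·d(Jx,Jy) for all x,y ∈ X, where α ∈ (0,1) and rα < 1. Then there exists a unique x₀ ∈ X which is both a startpoint and an endpoint of J and F (i.e. H({Jx₀},Fx₀) = 0 = H(Fx₀,{Jx₀})) if and only if J and F have the approximate mix-point property, i.e. inf_{x∈X} sup_{y∈Fx} d^s(Jx,y) = 0. -/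
open Set Filter
open scoped ENNReal

noncomputable section

/-- The symmetrization `d^s(x,y) = max (d x y) (d y x)` of a quasi-pseudometric. -/
def symm2 {X : Type*} (d : X → X → ℝ) (x y : X) : ℝ := max (d x y) (d y x)

/-- The (extended) Hausdorff-type distance
`H(A,B) = max (sup_{a∈A} inf_{b∈B} d a b) (sup_{b∈B} inf_{a∈A} d a b)`. -/
def qH {X : Type*} (d : X → X → ℝ) (A B : Set X) : ℝ≥0∞ :=
  max (⨆ a ∈ A, ⨅ b ∈ B, ENNReal.ofReal (d a b))
      (⨆ b ∈ B, ⨅ a ∈ A, ENNReal.ofReal (d a b))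

/-- Distance from a point to a set: `d(x,A) = inf_{a∈A} d x a`. -/
def dPS {X : Type*} (d : X → X → ℝ) (x : X) (A : Set X) : ℝ≥0∞ :=
  ⨅ a ∈ A, ENNReal.ofReal (d x a)

/-- Distance from a set to a point: `d(A,x) = inf_{a∈A} d a x`. -/
def dSP {X : Type*} (d : X → X → ℝ) (A : Set X) (x : X) : ℝ≥0∞ :=
  ⨅ a ∈ A, ENNReal.ofReal (d a x)

theorem stmt6 {X : Type*} [Nonempty X]
    (d : X → X → ℝ)
    (hd_nonneg : ∀ x y : X, 0 ≤ d x y)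
    (hd_refl : ∀ x : X, d x x = 0)
    (hd_tri : ∀ x y z : X, d x z ≤ d x y + d y z)
    (hd_T0 : ∀ x y : X, d x y = 0 → d y x = 0 → x = y)
    (hbicomplete : ∀ u : ℕ → X,
      (∀ ε : ℝ, 0 < ε → ∃ N : ℕ, ∀ m ≥ N, ∀ n ≥ N, symm2 d (u m) (u n) < ε) →
      ∃ l : X, ∀ ε : ℝ, 0 < ε → ∃ N : ℕ, ∀ n ≥ N, symm2 d (u n) l < ε)
    (J : X → X)
    (hJ_cont : ∀ x : X, ∀ ε : ℝ, 0 < ε → ∃ δ : ℝ, 0 < δ ∧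
      ∀ y : X, symm2 d x y < δ → symm2 d (J x) (J y) < ε)
    (r : ℝ) (hr : 0 < r)
    (hJ_exp : ∀ x y : X, r * d x y ≤ d (J x) (J y))
    (F : X → Set X)
    (hF_ne : ∀ x : X, (F x).Nonempty)
    (hF_bdd : ∀ x : X, ∃ M : ℝ, ∀ a ∈ F x, ∀ c ∈ F x, symm2 d a c ≤ M)
    (hF_closed : ∀ x : X, ∀ u : ℕ → X, (∀ n : ℕ, u n ∈ F x) → ∀ l : X,
      Filter.Tendsto (fun n => symm2 d (u n) l) Filter.atTop (nhds (0 : ℝ)) → l ∈ F x)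
    (α : ℝ) (hα0 : 0 < α) (hα1 : α < 1) (hrα : r * α < 1)
    (hcontr : ∀ x y : X, qH d (F x) (F y) ≤ ENNReal.ofReal (α * d (J x) (J y)))
    :
    (∃! x₀ : X, qH d {J x₀} (F x₀) = 0 ∧ qH d (F x₀) {J x₀} = 0) ↔ (⨅ x : X, ⨆ y ∈ F x, ENNReal.ofReal (symm2 d (J x) y)) = 0 := by
  have key : ∀ x y : X, ∀ η : ℝ, 0 < η →
      (∀ a ∈ F x, ∃ b ∈ F y, d a b < α * d (J x) (J y) + η) ∧
      (∀ b ∈ F y, ∃ a ∈ F x, d a b < α * d (J x) (J y) + η) := by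
    intro x y η hη
    have h := hcontr x y
    have h0 : 0 ≤ α * d (J x) (J y) := mul_nonneg hα0.le (hd_nonneg _ _)
    have hlt : ENNReal.ofReal (α * d (J x) (J y)) < ENNReal.ofReal (α * d (J x) (J y) + η) :=
      (ENNReal.ofReal_lt_ofReal_iff (by linarith)).2 (by linarith)
    unfold qH at h
    rw [max_le_iff] at h
    obtain ⟨h1, h2⟩ := h
    simp only [iSup_le_iff] at h1 h2
    constructor
    · intro a ha
      have h3 := lt_of_le_of_lt (h1 a ha) hlt
      simp only [iInf_lt_iff] at h3
      obtain ⟨b, hb, h4⟩ := h3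
      exact ⟨b, hb, (ENNReal.ofReal_lt_ofReal_iff (by linarith)).1 h4⟩
    · intro b hb
      have h3 := lt_of_le_of_lt (h2 b hb) hlt
      simp only [iInf_lt_iff] at h3
      obtain ⟨a, ha, h4⟩ := h3
      exact ⟨a, ha, (ENNReal.ofReal_lt_ofReal_iff (by linarith)).1 h4⟩
  have hfix : ∀ x : X, (qH d {J x} (F x) = 0 ∧ qH d (F x) {J x} = 0) ↔
      ∀ y ∈ F x, d (J x) y ≤ 0 ∧ d y (J x) ≤ 0 := by
    intro x
    constructor
    · rintro ⟨h1, h2⟩ y hy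
      unfold qH at h1 h2
      rw [← nonpos_iff_eq_zero, max_le_iff] at h1 h2
      have h3 := h1.2
      have h4 := h2.1
      simp only [iSup_le_iff, iInf_singleton, mem_singleton_iff, iInf_iInf_eq_left] at h3 h4
      exact ⟨by simpa using h3 y hy, by simpa using h4 y hy⟩
    · intro h
      obtain ⟨b, hb⟩ := hF_ne x
      unfold qH
      rw [← nonpos_iff_eq_zero, ← nonpos_iff_eq_zero, max_le_iff, max_le_iff]
      simp only [iSup_le_iff, mem_singleton_iff, iInf_iInf_eq_left, forall_eq]
      refine ⟨⟨iInf₂_le_of_le b hb ?_, fun y hy => ?_⟩, fun y hy => ?_, iInf₂_le_of_le b hb ?_⟩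
      · simpa using (h b hb).1
      · simpa using (h y hy).1
      · simpa using (h y hy).2
      · simpa using (h b hb).2
  have hest : ∀ x y : X, ∀ ε : ℝ, (∀ a ∈ F x, d (J x) a ≤ ε ∧ d a (J x) ≤ ε) →
      ∀ ε' : ℝ, (∀ a ∈ F y, d (J y) a ≤ ε' ∧ d a (J y) ≤ ε') →
      (1 - α) * d (J x) (J y) ≤ ε + ε' := by
    intro x y ε hx ε' hy
    refine le_of_forall_pos_le_add fun η hη => ?_
    obtain ⟨a, ha⟩ := hF_ne x
    obtain ⟨b, hb, hab⟩ := (key x y η hη).1 a ha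
    have := hd_tri (J x) a (J y)
    have := hd_tri a b (J y)
    have := (hx a ha).1
    have := (hy b hb).2
    linarith
  constructor
  · rintro ⟨x, hx, -⟩
    have hx := (hfix x).1 hx
    rw [← nonpos_iff_eq_zero]
    refine iInf_le_of_le x ?_
    refine iSup₂_le fun y hy => ?_
    have := hx y hy
    simpa [symm2] using this
  · intro hinf
    have happ : ∀ ε : ℝ, 0 < ε → ∃ x, ∀ y ∈ F x, d (J x) y ≤ ε ∧ d y (J x) ≤ ε := by
      intro ε hε
      have h : (⨅ x : X, ⨆ y ∈ F x, ENNReal.ofReal (symm2 d (J x) y)) < ENNReal.ofReal ε := by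
        rw [hinf]; simpa using hε
      rw [iInf_lt_iff] at h
      obtain ⟨x, hx⟩ := h
      refine ⟨x, fun y hy => ?_⟩
      have h2 := hx.le
      simp only [iSup_le_iff] at h2
      have h3 := (ENNReal.ofReal_le_ofReal_iff hε.le).1 (h2 y hy)
      exact max_le_iff.1 h3
    have hpos : ∀ n : ℕ, (0 : ℝ) < 1 / ((n : ℝ) + 1) := fun n => Nat.one_div_pos_of_nat
    choose u hu using fun n : ℕ => happ (1 / ((n : ℝ) + 1)) (hpos n)
    have hsmall : ∀ ε : ℝ, 0 < ε → ∃ N : ℕ, ∀ n ≥ N, 1 / ((n : ℝ) + 1) < ε := by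
      intro ε hε
      obtain ⟨N, hN⟩ := exists_nat_one_div_lt hε
      exact ⟨N, fun n hn => lt_of_le_of_lt (Nat.one_div_le_one_div hn) hN⟩
    have h1α : 0 < 1 - α := by linarith
    obtain ⟨l, hl⟩ := hbicomplete u (by
      intro ε hε
      obtain ⟨N, hN⟩ := hsmall ((1 - α) * r * ε / 2) (by positivity)
      have main : ∀ m ≥ N, ∀ n ≥ N, d (u m) (u n) < ε := by
        intro m hm n hn
        have h1 := hest _ _ _ (hu m) _ (hu n)
        have h2 := hN m hm
        have h3 := hN n hn
        have h4 := mul_le_mul_of_nonneg_left (hJ_exp (u m) (u n)) h1α.le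
        have h5 : ((1 - α) * r) * d (u m) (u n) < ((1 - α) * r) * ε := by linarith
        exact lt_of_mul_lt_mul_left h5 (by positivity)
      exact ⟨N, fun m hm n hn => max_lt (main m hm n hn) (main n hn m hm)⟩)
    have hlfix : ∀ y ∈ F l, d (J l) y ≤ 0 ∧ d y (J l) ≤ 0 := by
      intro b hb
      have H : ∀ ε : ℝ, 0 < ε → d (J l) b ≤ 0 + ε ∧ d b (J l) ≤ 0 + ε := by
        intro ε hε
        obtain ⟨δ, hδ, hJ⟩ := hJ_cont l (ε / 4) (by positivity)
        obtain ⟨N, hN⟩ := hl δ hδ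
        obtain ⟨M, hM⟩ := hsmall (ε / 4) (by positivity)
        have e1 := hN (max N M) (le_max_left _ _)
        have e2 := hM (max N M) (le_max_right _ _)
        have e3 := hu (max N M)
        generalize u (max N M) = x at e1 e3
        have e4 := hJ x (by unfold symm2 at *; rwa [max_comm])
        obtain ⟨e5, e6⟩ := max_lt_iff.1 e4
        have n1 : α * d (J l) (J x) ≤ d (J l) (J x) :=
          mul_le_of_le_one_left (hd_nonneg _ _) hα1.le
        have n2 : α * d (J x) (J l) ≤ d (J x) (J l) :=
          mul_le_of_le_one_left (hd_nonneg _ _) hα1.le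
        constructor
        · obtain ⟨a, ha, hab⟩ := (key x l (ε / 4) (by positivity)).2 b hb
          have := hd_tri (J l) (J x) b
          have := hd_tri (J x) a b
          have := (e3 a ha).1
          linarith
        · obtain ⟨a, ha, hab⟩ := (key l x (ε / 4) (by positivity)).1 b hb
          have := hd_tri b (J x) (J l)
          have := hd_tri b a (J x)
          have := (e3 a ha).2
          linarith
      exact ⟨le_of_forall_pos_le_add fun ε hε => (H ε hε).1,
        le_of_forall_pos_le_add fun ε hε => (H ε hε).2⟩
    refine ⟨l, (hfix l).2 hlfix, ?_⟩
    intro y hy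
    have hy := (hfix y).1 hy
    have Z : ∀ p q : X, (∀ a ∈ F p, d (J p) a ≤ 0 ∧ d a (J p) ≤ 0) →
        (∀ a ∈ F q, d (J q) a ≤ 0 ∧ d a (J q) ≤ 0) → d p q = 0 := by
      intro p q hp hq
      have h1 := hest p q 0 hp 0 hq
      have h4 := mul_le_mul_of_nonneg_left (hJ_exp p q) h1α.le
      have h5 : ((1 - α) * r) * d p q ≤ ((1 - α) * r) * 0 := by linarith
      exact le_antisymm (le_of_mul_le_mul_left h5 (by positivity)) (hd_nonneg _ _)
    exact hd_T0 _ _ (Z _ _ hy hlfix) (Z _ _ hlfix hy)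
end
end

section
/- Let (X,d) be a bicomplete T0-quasi-metric space and J : X → X a single-valued map continuous with respect to d^s such that r·d(x,y) ≤ d(Jx,Jy) for all x,y ∈ X, for some constant r > 0. Let F : X → CB(X) be a set-valued map satisfying H(Fx,Fy) ≤ α·d(Jx,Jy) for all x,y ∈ X, where α ∈ (0,1) and rα < 1. If J and F have the approximate mix-point property, i.e. inf_{x∈X} sup_{y∈Fx} d^s(Jx,y) = 0, then F has a J-fixed point, i.e. there exists x ∈ X with Jx ∈ Fx. -/
open Set Filter
open scoped ENNReal

noncomputable section

theorem stmt7 {X : Type*} [Nonempty X]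
    (d : X → X → ℝ)
    (hd_nonneg : ∀ x y : X, 0 ≤ d x y)
    (hd_refl : ∀ x : X, d x x = 0)
    (hd_tri : ∀ x y z : X, d x z ≤ d x y + d y z)
    (hd_T0 : ∀ x y : X, d x y = 0 → d y x = 0 → x = y)
    (hbicomplete : ∀ u : ℕ → X,
      (∀ ε : ℝ, 0 < ε → ∃ N : ℕ, ∀ m ≥ N, ∀ n ≥ N, symm2 d (u m) (u n) < ε) →
      ∃ l : X, ∀ ε : ℝ, 0 < ε → ∃ N : ℕ, ∀ n ≥ N, symm2 d (u n) l < ε)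
    (J : X → X)
    (hJ_cont : ∀ x : X, ∀ ε : ℝ, 0 < ε → ∃ δ : ℝ, 0 < δ ∧
      ∀ y : X, symm2 d x y < δ → symm2 d (J x) (J y) < ε)
    (r : ℝ) (hr : 0 < r)
    (hJ_exp : ∀ x y : X, r * d x y ≤ d (J x) (J y))
    (F : X → Set X)
    (hF_ne : ∀ x : X, (F x).Nonempty)
    (hF_bdd : ∀ x : X, ∃ M : ℝ, ∀ a ∈ F x, ∀ c ∈ F x, symm2 d a c ≤ M)
    (hF_closed : ∀ x : X, ∀ u : ℕ → X, (∀ n : ℕ, u n ∈ F x) → ∀ l : X,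
      Filter.Tendsto (fun n => symm2 d (u n) l) Filter.atTop (nhds (0 : ℝ)) → l ∈ F x)
    (α : ℝ) (hα0 : 0 < α) (hα1 : α < 1) (hrα : r * α < 1)
    (hcontr : ∀ x y : X, qH d (F x) (F y) ≤ ENNReal.ofReal (α * d (J x) (J y)))
    (hmix : (⨅ x : X, ⨆ y ∈ F x, ENNReal.ofReal (symm2 d (J x) y)) = 0) :
    ∃ x : X, J x ∈ F x := by
  have h1 : ∀ x y : X, ∀ a ∈ F x, ∀ η : ℝ, 0 < η → ∃ b ∈ F y, d a b < α * d (J x) (J y) + η := by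
    intro x y a ha η hη
    have hnn : 0 ≤ α * d (J x) (J y) := mul_nonneg hα0.le (hd_nonneg _ _)
    have h : (⨅ b ∈ F y, ENNReal.ofReal (d a b)) < ENNReal.ofReal (α * d (J x) (J y) + η) := by
      refine lt_of_le_of_lt ?_ ((ENNReal.ofReal_lt_ofReal_iff (by linarith)).2
        (show α * d (J x) (J y) < _ by linarith))
      refine le_trans ?_ (hcontr x y)
      refine le_trans ?_ (le_max_left _ _)
      exact le_iSup₂ (f := fun a (_ : a ∈ F x) => ⨅ b ∈ F y, ENNReal.ofReal (d a b)) a ha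
    simp only [iInf_lt_iff] at h
    obtain ⟨b, hb, h⟩ := h
    exact ⟨b, hb, (ENNReal.ofReal_lt_ofReal_iff (by linarith)).1 h⟩
  have h2 : ∀ x y : X, ∀ b ∈ F y, ∀ η : ℝ, 0 < η → ∃ a ∈ F x, d a b < α * d (J x) (J y) + η := by
    intro x y b hb η hη
    have hnn : 0 ≤ α * d (J x) (J y) := mul_nonneg hα0.le (hd_nonneg _ _)
    have h : (⨅ a ∈ F x, ENNReal.ofReal (d a b)) < ENNReal.ofReal (α * d (J x) (J y) + η) := by
      refine lt_of_le_of_lt ?_ ((ENNReal.ofReal_lt_ofReal_iff (by linarith)).2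
        (show α * d (J x) (J y) < _ by linarith))
      refine le_trans ?_ (hcontr x y)
      refine le_trans ?_ (le_max_right _ _)
      exact le_iSup₂ (f := fun b (_ : b ∈ F y) => ⨅ a ∈ F x, ENNReal.ofReal (d a b)) b hb
    simp only [iInf_lt_iff] at h
    obtain ⟨a, ha, h⟩ := h
    exact ⟨a, ha, (ENNReal.ofReal_lt_ofReal_iff (by linarith)).1 h⟩
  have h3 : ∀ ε : ℝ, 0 < ε → ∃ x : X, ∀ y ∈ F x, d (J x) y < ε ∧ d y (J x) < ε := by
    intro ε hε
    have h : (⨅ x : X, ⨆ y ∈ F x, ENNReal.ofReal (symm2 d (J x) y)) < ENNReal.ofReal ε := by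
      rw [hmix]; exact ENNReal.ofReal_pos.2 hε
    obtain ⟨x, hx⟩ := iInf_lt_iff.1 h
    refine ⟨x, fun y hy => ?_⟩
    have h' := lt_of_le_of_lt
      (le_iSup₂ (f := fun y (_ : y ∈ F x) => ENNReal.ofReal (symm2 d (J x) y)) y hy) hx
    exact max_lt_iff.1 ((ENNReal.ofReal_lt_ofReal_iff hε).1 h')
  choose u hu using fun n : ℕ => h3 (1 / ((n : ℝ) + 1)) (by positivity)
  have hsmall : ∀ ε : ℝ, 0 < ε → ∃ N : ℕ, ∀ n ≥ N, 1 / ((n : ℝ) + 1) < ε := by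
    intro ε hε
    obtain ⟨N, hN⟩ := exists_nat_one_div_lt hε
    exact ⟨N, fun n hn => lt_of_le_of_lt (Nat.one_div_le_one_div hn) hN⟩
  have hd : ∀ ε : ℝ, 0 < ε → ∃ N : ℕ, ∀ m ≥ N, ∀ n ≥ N, d (u m) (u n) < ε := by
    intro ε hε
    have hα : 0 < 1 - α := by linarith
    have hη : 0 < (1 - α) * (r * ε) / 3 := by positivity
    obtain ⟨N, hN⟩ := hsmall _ hη
    refine ⟨N, fun m hm n hn => ?_⟩
    obtain ⟨a, ha⟩ := hF_ne (u m)
    obtain ⟨b, hb, hab⟩ := h1 (u m) (u n) a ha _ hη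
    have e1 := (hu m a ha).1
    have e2 := (hu n b hb).2
    have e3 := hN m hm
    have e4 := hN n hn
    have t1 := hd_tri (J (u m)) a (J (u n))
    have t2 := hd_tri a b (J (u n))
    have e5 : (1 - α) * d (J (u m)) (J (u n)) < (1 - α) * (r * ε) := by linarith
    have e6 := lt_of_mul_lt_mul_left e5 hα.le
    exact lt_of_mul_lt_mul_left ((hJ_exp _ _).trans_lt e6) hr.le
  obtain ⟨x, hx⟩ := hbicomplete u (by
    intro ε hε
    obtain ⟨N, hN⟩ := hd ε hε
    exact ⟨N, fun m hm n hn => max_lt (hN m hm n hn) (hN n hn m hm)⟩)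
  refine ⟨x, ?_⟩
  obtain ⟨b, hb⟩ := hF_ne x
  have key : ∀ ε : ℝ, 0 < ε → d (J x) b ≤ ε ∧ d b (J x) ≤ ε := by
    intro ε hε
    have hη : 0 < ε / 4 := by positivity
    obtain ⟨δ, hδ, hJ⟩ := hJ_cont x _ hη
    obtain ⟨N, hN⟩ := hx δ hδ
    obtain ⟨M, hM⟩ := hsmall _ hη
    obtain ⟨n, hn1, hn2⟩ : ∃ n, N ≤ n ∧ M ≤ n := ⟨max N M, le_max_left _ _, le_max_right _ _⟩
    have hj := hJ (u n) (by
      have := hN n hn1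
      unfold symm2 at this ⊢
      rwa [max_comm])
    obtain ⟨j1, j2⟩ := max_lt_iff.1 hj
    have hs := hM n hn2
    constructor
    · obtain ⟨a, ha, hab⟩ := h2 (u n) x b hb _ hη
      have := (hu n a ha).1
      have t1 := hd_tri (J x) (J (u n)) b
      have t2 := hd_tri (J (u n)) a b
      have := mul_le_of_le_one_left (hd_nonneg (J (u n)) (J x)) hα1.le
      linarith
    · obtain ⟨a, ha, hab⟩ := h1 x (u n) b hb _ hη
      have := (hu n a ha).2
      have t1 := hd_tri b (J (u n)) (J x)
      have t2 := hd_tri b a (J (u n))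
      have := mul_le_of_le_one_left (hd_nonneg (J x) (J (u n))) hα1.le
      linarith
  have e : J x = b := hd_T0 _ _
    (le_antisymm (le_of_forall_pos_le_add fun ε hε => by linarith [(key ε hε).1]) (hd_nonneg _ _))
    (le_antisymm (le_of_forall_pos_le_add fun ε hε => by linarith [(key ε hε).2]) (hd_nonneg _ _))
  rw [e]; exact hb
end
end

section
/- Let (X,d) be a bicomplete T0-quasi-metric space and J : X → X a single-valued map continuous with respect to d^s such that r·d(x,y) ≤ d(Jx,Jy) for all x,y ∈ X, for some constant r > 0. Let F : X → CB(X) be a set-valued map satisfying H(Fx,Fy) ≤ α·[d(Jx,Fx) + d(Jy,Fy)] for all x,y ∈ X, where α ∈ (0,1/2). Then there exists a unique x₀ ∈ X which is both a startpoint and an endpoint of J and F (i.e. H({Jx₀},Fx₀) = 0 = H(Fx₀,{Jx₀})) if and only if J and F have the approximate mix-point property, i.e. inf_{x∈X} sup_{y∈Fx} d^s(Jx,y) = 0. -/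
open Set Filter
open scoped ENNReal

noncomputable section

theorem stmt8 {X : Type*} [Nonempty X]
    (d : X → X → ℝ)
    (hd_nonneg : ∀ x y : X, 0 ≤ d x y)
    (hd_refl : ∀ x : X, d x x = 0)
    (hd_tri : ∀ x y z : X, d x z ≤ d x y + d y z)
    (hd_T0 : ∀ x y : X, d x y = 0 → d y x = 0 → x = y)
    (hbicomplete : ∀ u : ℕ → X,
      (∀ ε : ℝ, 0 < ε → ∃ N : ℕ, ∀ m ≥ N, ∀ n ≥ N, symm2 d (u m) (u n) < ε) →
      ∃ l : X, ∀ ε : ℝ, 0 < ε → ∃ N : ℕ, ∀ n ≥ N, symm2 d (u n) l < ε)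
    (J : X → X)
    (hJ_cont : ∀ x : X, ∀ ε : ℝ, 0 < ε → ∃ δ : ℝ, 0 < δ ∧
      ∀ y : X, symm2 d x y < δ → symm2 d (J x) (J y) < ε)
    (r : ℝ) (hr : 0 < r)
    (hJ_exp : ∀ x y : X, r * d x y ≤ d (J x) (J y))
    (F : X → Set X)
    (hF_ne : ∀ x : X, (F x).Nonempty)
    (hF_bdd : ∀ x : X, ∃ M : ℝ, ∀ a ∈ F x, ∀ c ∈ F x, symm2 d a c ≤ M)
    (hF_closed : ∀ x : X, ∀ u : ℕ → X, (∀ n : ℕ, u n ∈ F x) → ∀ l : X,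
      Filter.Tendsto (fun n => symm2 d (u n) l) Filter.atTop (nhds (0 : ℝ)) → l ∈ F x)
    (α : ℝ) (hα0 : 0 < α) (hα1 : α < 1 / 2)
    (hcontr : ∀ x y : X, qH d (F x) (F y) ≤ ENNReal.ofReal α * (dPS d (J x) (F x) + dPS d (J y) (F y)))
    :
    (∃! x₀ : X, qH d {J x₀} (F x₀) = 0 ∧ qH d (F x₀) {J x₀} = 0) ↔ (⨅ x : X, ⨆ y ∈ F x, ENNReal.ofReal (symm2 d (J x) y)) = 0 := by
  -- contraction in real form, both directions
  have hle : ∀ x y p q, p ∈ F x → q ∈ F y →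
      qH d (F x) (F y) ≤ ENNReal.ofReal (α * (d (J x) p + d (J y) q)) := by
    intro x y p q hp hq
    refine (hcontr x y).trans ?_
    rw [ENNReal.ofReal_mul hα0.le, ENNReal.ofReal_add (hd_nonneg _ _) (hd_nonneg _ _)]
    gcongr
    · exact iInf₂_le p hp
    · exact iInf₂_le q hq
  have hK1 : ∀ x y p q, p ∈ F x → q ∈ F y → ∀ η : ℝ, 0 < η → ∀ a ∈ F x,
      ∃ b ∈ F y, d a b < α * (d (J x) p + d (J y) q) + η := by
    intro x y p q hp hq η hη a ha
    have h0 : 0 ≤ α * (d (J x) p + d (J y) q) :=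
      mul_nonneg hα0.le (add_nonneg (hd_nonneg _ _) (hd_nonneg _ _))
    have h1 : (⨅ b ∈ F y, ENNReal.ofReal (d a b)) ≤ qH d (F x) (F y) :=
      le_trans (le_iSup₂ (f := fun a (_ : a ∈ F x) => ⨅ b ∈ F y, ENNReal.ofReal (d a b)) a ha)
        (le_max_left _ _)
    have h2 : (⨅ b ∈ F y, ENNReal.ofReal (d a b))
        < ENNReal.ofReal (α * (d (J x) p + d (J y) q) + η) :=
      (h1.trans (hle x y p q hp hq)).trans_lt
        ((ENNReal.ofReal_lt_ofReal_iff (by linarith)).2 (by linarith))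
    simp only [iInf_lt_iff] at h2
    obtain ⟨b, hb, h3⟩ := h2
    exact ⟨b, hb, (ENNReal.ofReal_lt_ofReal_iff (by linarith)).1 h3⟩
  have hK2 : ∀ x y p q, p ∈ F x → q ∈ F y → ∀ η : ℝ, 0 < η → ∀ b ∈ F y,
      ∃ a ∈ F x, d a b < α * (d (J x) p + d (J y) q) + η := by
    intro x y p q hp hq η hη b hb
    have h0 : 0 ≤ α * (d (J x) p + d (J y) q) :=
      mul_nonneg hα0.le (add_nonneg (hd_nonneg _ _) (hd_nonneg _ _))
    have h1 : (⨅ a ∈ F x, ENNReal.ofReal (d a b)) ≤ qH d (F x) (F y) :=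
      le_trans (le_iSup₂ (f := fun b (_ : b ∈ F y) => ⨅ a ∈ F x, ENNReal.ofReal (d a b)) b hb)
        (le_max_right _ _)
    have h2 : (⨅ a ∈ F x, ENNReal.ofReal (d a b))
        < ENNReal.ofReal (α * (d (J x) p + d (J y) q) + η) :=
      (h1.trans (hle x y p q hp hq)).trans_lt
        ((ENNReal.ofReal_lt_ofReal_iff (by linarith)).2 (by linarith))
    simp only [iInf_lt_iff] at h2
    obtain ⟨a, ha, h3⟩ := h2
    exact ⟨a, ha, (ENNReal.ofReal_lt_ofReal_iff (by linarith)).1 h3⟩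
  -- characterization of the mix-points
  have hZ : ∀ x, (qH d {J x} (F x) = 0 ∧ qH d (F x) {J x} = 0) ↔
      ∀ y ∈ F x, d (J x) y ≤ 0 ∧ d y (J x) ≤ 0 := by
    intro x
    constructor
    · rintro ⟨h1, h2⟩ y hy
      have h3 := le_antisymm ((le_max_right _ _).trans h1.le) bot_le
      have h4 := le_antisymm ((le_max_left _ _).trans h2.le) bot_le
      simp only [mem_singleton_iff, iInf_iInf_eq_left, bot_eq_zero, ENNReal.iSup_eq_zero,
        ENNReal.ofReal_eq_zero] at h3 h4
      exact ⟨h3 y hy, h4 y hy⟩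
    · intro h
      obtain ⟨y, hy⟩ := hF_ne x
      have e1 : (⨅ b ∈ F x, ENNReal.ofReal (d (J x) b)) = 0 :=
        le_antisymm ((iInf₂_le y hy).trans (ENNReal.ofReal_eq_zero.2 (h y hy).1).le) bot_le
      have e2 : (⨅ b ∈ F x, ENNReal.ofReal (d b (J x))) = 0 :=
        le_antisymm ((iInf₂_le y hy).trans (ENNReal.ofReal_eq_zero.2 (h y hy).2).le) bot_le
      constructor
      · apply le_antisymm _ bot_le
        apply max_le
        · simpa using e1
        · simpa using fun z hz => (h z hz).1
      · apply le_antisymm _ bot_le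
        apply max_le
        · simpa using fun z hz => (h z hz).2
        · simpa using e2
  -- distance estimate
  have hD : ∀ x y (e f : ℝ), (∀ z ∈ F x, d (J x) z ≤ e ∧ d z (J x) ≤ e) →
      (∀ z ∈ F y, d (J y) z ≤ f ∧ d z (J y) ≤ f) → r * d x y ≤ 2 * (e + f) := by
    intro x y e f hx hy
    refine (hJ_exp x y).trans (le_of_forall_pos_le_add fun η hη => ?_)
    obtain ⟨p, hp⟩ := hF_ne x
    obtain ⟨q, hq⟩ := hF_ne y
    obtain ⟨b, hb, hab⟩ := hK1 x y p q hp hq η hη p hp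
    have t1 := hd_tri (J x) p (J y)
    have t2 := hd_tri p b (J y)
    have := (hx p hp).1
    have := (hy q hq).1
    have := (hy b hb).2
    have := hd_nonneg (J x) p
    have := hd_nonneg (J y) q
    have : α * (d (J x) p + d (J y) q) ≤ 1 * (d (J x) p + d (J y) q) :=
      mul_le_mul_of_nonneg_right (by linarith) (by linarith)
    linarith
  constructor
  · rintro ⟨x, hx, -⟩
    rw [hZ] at hx
    refine le_antisymm ((iInf_le _ x).trans ?_) bot_le
    refine iSup₂_le fun y hy => ?_
    rw [ENNReal.ofReal_eq_zero.2]
    exact max_le (hx y hy).1 (hx y hy).2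
  · intro h
    have hP : ∀ n : ℕ, ∃ x, ∀ z ∈ F x, d (J x) z ≤ 1 / ((n : ℝ) + 1) ∧
        d z (J x) ≤ 1 / ((n : ℝ) + 1) := by
      intro n
      have hn : (0 : ℝ) < 1 / ((n : ℝ) + 1) := by positivity
      have h1 : (⨅ x : X, ⨆ y ∈ F x, ENNReal.ofReal (symm2 d (J x) y))
          < ENNReal.ofReal (1 / ((n : ℝ) + 1)) := by
        rw [h]; exact ENNReal.ofReal_pos.2 hn
      obtain ⟨x, hx⟩ := iInf_lt_iff.1 h1
      refine ⟨x, fun z hz => ?_⟩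
      have h2 : ENNReal.ofReal (symm2 d (J x) z) ≤ ENNReal.ofReal (1 / ((n : ℝ) + 1)) :=
        (le_iSup₂ (f := fun y (_ : y ∈ F x) => ENNReal.ofReal (symm2 d (J x) y)) z hz).trans hx.le
      have h3 := (ENNReal.ofReal_le_ofReal_iff hn.le).1 h2
      exact max_le_iff.1 h3
    choose u hu using hP
    have hsmall : ∀ ε : ℝ, 0 < ε → ∃ N : ℕ, ∀ n ≥ N, 1 / ((n : ℝ) + 1) < ε := by
      intro ε hε
      obtain ⟨N, hN⟩ := exists_nat_one_div_lt hε
      refine ⟨N, fun n hn => lt_of_le_of_lt ?_ hN⟩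
      have : (N : ℝ) ≤ n := by exact_mod_cast hn
      gcongr
    obtain ⟨l, hl⟩ := hbicomplete u (by
      intro ε hε
      obtain ⟨N, hN⟩ := hsmall (r * ε / 4) (by positivity)
      have key : ∀ m ≥ N, ∀ n ≥ N, d (u m) (u n) < ε := by
        intro m hm n hn
        have h1 := hD _ _ _ _ (hu m) (hu n)
        have h2 := hN m hm
        have h3 := hN n hn
        exact lt_of_mul_lt_mul_left (a := r) (by linarith) hr.le
      exact ⟨N, fun m hm n hn => max_lt (key m hm n hn) (key n hn m hm)⟩)
    -- one index good for a given tolerance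
    have hgood : ∀ ε : ℝ, 0 < ε → ∃ x, d (J l) (J x) < ε ∧ d (J x) (J l) < ε ∧
        ∀ z ∈ F x, d (J x) z ≤ ε ∧ d z (J x) ≤ ε := by
      intro ε hε
      obtain ⟨δ, hδ, hJ⟩ := hJ_cont l ε hε
      obtain ⟨N, hN⟩ := hl δ hδ
      obtain ⟨M, hM⟩ := hsmall ε hε
      have h1 := hN (max N M) (le_max_left _ _)
      have h2 := hM (max N M) (le_max_right _ _)
      have h3 := hJ (u (max N M)) (by
        unfold symm2 at h1 ⊢
        rwa [max_comm])
      obtain ⟨h4, h5⟩ := max_lt_iff.1 h3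
      exact ⟨u (max N M), h4, h5, fun z hz =>
        ⟨((hu _ z hz).1).trans h2.le, ((hu _ z hz).2).trans h2.le⟩⟩
    have hl1 : ∀ b ∈ F l, d (J l) b ≤ 0 := by
      intro b hb
      refine le_of_forall_pos_le_add fun ε hε => ?_
      obtain ⟨x, hx1, hx2, hx3⟩ := hgood (ε / 8) (by positivity)
      obtain ⟨p, hp⟩ := hF_ne x
      obtain ⟨a, ha, hab⟩ := hK2 x l p b hp hb (ε / 8) (by positivity) b hb
      have t1 := hd_tri (J l) (J x) b
      have t2 := hd_tri (J x) a b
      have := (hx3 a ha).1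
      have := (hx3 p hp).1
      have := hd_nonneg (J x) p
      have := hd_nonneg (J l) b
      have : α * (d (J x) p + d (J l) b) ≤ 1 / 2 * (d (J x) p + d (J l) b) :=
        mul_le_mul_of_nonneg_right (by linarith) (by linarith)
      linarith
    have hl2 : ∀ b ∈ F l, d b (J l) ≤ 0 := by
      intro b hb
      refine le_of_forall_pos_le_add fun ε hε => ?_
      obtain ⟨x, hx1, hx2, hx3⟩ := hgood (ε / 8) (by positivity)
      obtain ⟨p, hp⟩ := hF_ne x
      obtain ⟨a, ha, hab⟩ := hK1 l x b p hb hp (ε / 8) (by positivity) b hb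
      have t1 := hd_tri b (J x) (J l)
      have t2 := hd_tri b a (J x)
      have := (hx3 a ha).2
      have := (hx3 p hp).1
      have := hd_nonneg (J x) p
      have := hd_nonneg (J l) b
      have := hl1 b hb
      have : α * (d (J l) b + d (J x) p) ≤ 1 / 2 * (d (J l) b + d (J x) p) :=
        mul_le_mul_of_nonneg_right (by linarith) (by linarith)
      linarith
    refine ⟨l, (hZ l).2 fun b hb => ⟨hl1 b hb, hl2 b hb⟩, ?_⟩
    intro y hy
    have hy' := (hZ y).1 hy
    have hl' : ∀ z ∈ F l, d (J l) z ≤ 0 ∧ d z (J l) ≤ 0 := fun b hb => ⟨hl1 b hb, hl2 b hb⟩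
    have h1 := hD _ _ _ _ hy' hl'
    have h2 := hD _ _ _ _ hl' hy'
    refine hd_T0 _ _ (le_antisymm ?_ (hd_nonneg _ _)) (le_antisymm ?_ (hd_nonneg _ _))
    · exact le_of_mul_le_mul_left (by linarith) hr
    · exact le_of_mul_le_mul_left (by linarith) hr
end
end

section
/- Let (X,d) be a bicomplete T0-quasi-metric space and J : X → X a single-valued map continuous with respect to d^s such that r·d(x,y) ≤ d(Jx,Jy) for all x,y ∈ X, for some constant r > 0. Let F : X → CB(X) be a set-valued map satisfying H(Fx,Fy) ≤ α·[d(Jx,Fx) + d(Jy,Fy)] for all x,y ∈ X, where α ∈ (0,1/2). If J and F have the approximate mix-point property, i.e. inf_{x∈X} sup_{y∈Fx} d^s(Jx,y) = 0, then F has a J-fixed point, i.e. there exists x ∈ X with Jx ∈ Fx. -/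
open Set Filter
open scoped ENNReal

noncomputable section

theorem stmt9 {X : Type*} [Nonempty X]
    (d : X → X → ℝ)
    (hd_nonneg : ∀ x y : X, 0 ≤ d x y)
    (hd_refl : ∀ x : X, d x x = 0)
    (hd_tri : ∀ x y z : X, d x z ≤ d x y + d y z)
    (hd_T0 : ∀ x y : X, d x y = 0 → d y x = 0 → x = y)
    (hbicomplete : ∀ u : ℕ → X,
      (∀ ε : ℝ, 0 < ε → ∃ N : ℕ, ∀ m ≥ N, ∀ n ≥ N, symm2 d (u m) (u n) < ε) →
      ∃ l : X, ∀ ε : ℝ, 0 < ε → ∃ N : ℕ, ∀ n ≥ N, symm2 d (u n) l < ε)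
    (J : X → X)
    (hJ_cont : ∀ x : X, ∀ ε : ℝ, 0 < ε → ∃ δ : ℝ, 0 < δ ∧
      ∀ y : X, symm2 d x y < δ → symm2 d (J x) (J y) < ε)
    (r : ℝ) (hr : 0 < r)
    (hJ_exp : ∀ x y : X, r * d x y ≤ d (J x) (J y))
    (F : X → Set X)
    (hF_ne : ∀ x : X, (F x).Nonempty)
    (hF_bdd : ∀ x : X, ∃ M : ℝ, ∀ a ∈ F x, ∀ c ∈ F x, symm2 d a c ≤ M)
    (hF_closed : ∀ x : X, ∀ u : ℕ → X, (∀ n : ℕ, u n ∈ F x) → ∀ l : X,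
      Filter.Tendsto (fun n => symm2 d (u n) l) Filter.atTop (nhds (0 : ℝ)) → l ∈ F x)
    (α : ℝ) (hα0 : 0 < α) (hα1 : α < 1 / 2)
    (hcontr : ∀ x y : X, qH d (F x) (F y) ≤ ENNReal.ofReal α * (dPS d (J x) (F x) + dPS d (J y) (F y)))
    (hmix : (⨅ x : X, ⨆ y ∈ F x, ENNReal.ofReal (symm2 d (J x) y)) = 0) :
    ∃ x : X, J x ∈ F x := by
  have key : ∀ x y : X, ∀ ex ey ε : ℝ, 0 ≤ ex → 0 ≤ ey → 0 < ε →
      dPS d (J x) (F x) ≤ ENNReal.ofReal ex → dPS d (J y) (F y) ≤ ENNReal.ofReal ey →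
      (∀ a ∈ F x, ∃ b ∈ F y, d a b < α * (ex + ey) + ε) ∧
      (∀ b ∈ F y, ∃ a ∈ F x, d a b < α * (ex + ey) + ε) := by
    intro x y ex ey ε hex hey hε h1 h2
    have hH : qH d (F x) (F y) < ENNReal.ofReal (α * (ex + ey) + ε) := by
      refine lt_of_le_of_lt (b := ENNReal.ofReal (α * (ex + ey))) ?_ ?_
      · refine (hcontr x y).trans ?_
        rw [ENNReal.ofReal_mul hα0.le, ENNReal.ofReal_add hex hey]
        gcongr
      · have : 0 ≤ α * (ex + ey) := by positivity
        exact (ENNReal.ofReal_lt_ofReal_iff (by linarith)).2 (by linarith)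
    unfold qH at hH
    obtain ⟨hA, hB⟩ := max_lt_iff.1 hH
    constructor
    · intro a ha
      have h3 := lt_of_le_of_lt
        (le_iSup₂ (f := fun a (_ : a ∈ F x) => ⨅ b ∈ F y, ENNReal.ofReal (d a b)) a ha) hA
      simp only [iInf_lt_iff] at h3
      obtain ⟨b, hb, h4⟩ := h3
      exact ⟨b, hb, (ENNReal.ofReal_lt_ofReal_iff'.1 h4).1⟩
    · intro b hb
      have h3 := lt_of_le_of_lt
        (le_iSup₂ (f := fun b (_ : b ∈ F y) => ⨅ a ∈ F x, ENNReal.ofReal (d a b)) b hb) hB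
      simp only [iInf_lt_iff] at h3
      obtain ⟨a, ha, h4⟩ := h3
      exact ⟨a, ha, (ENNReal.ofReal_lt_ofReal_iff'.1 h4).1⟩
  have happ : ∀ ε : ℝ, 0 < ε → ∃ x, ∀ y ∈ F x, d (J x) y ≤ ε ∧ d y (J x) ≤ ε := by
    intro ε hε
    have h0 : (⨅ x : X, ⨆ y ∈ F x, ENNReal.ofReal (symm2 d (J x) y)) < ENNReal.ofReal ε := by
      rw [hmix]; exact ENNReal.ofReal_pos.2 hε
    obtain ⟨x, hx⟩ := iInf_lt_iff.1 h0
    refine ⟨x, fun y hy => ?_⟩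
    have h3 := lt_of_le_of_lt
      (le_iSup₂ (f := fun y (_ : y ∈ F x) => ENNReal.ofReal (symm2 d (J x) y)) y hy) hx
    have h4 := (ENNReal.ofReal_lt_ofReal_iff'.1 h3).1
    exact ⟨((le_max_left _ _).trans_lt h4).le, ((le_max_right _ _).trans_lt h4).le⟩
  have hdps : ∀ x : X, ∀ e : ℝ, (∀ y ∈ F x, d (J x) y ≤ e ∧ d y (J x) ≤ e) →
      dPS d (J x) (F x) ≤ ENNReal.ofReal e := by
    intro x e h
    obtain ⟨y, hy⟩ := hF_ne x
    exact (iInf₂_le y hy).trans (ENNReal.ofReal_le_ofReal (h y hy).1)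
  have hpair : ∀ x y : X, ∀ e : ℝ, 0 < e → (∀ z ∈ F x, d (J x) z ≤ e ∧ d z (J x) ≤ e) →
      (∀ z ∈ F y, d (J y) z ≤ e ∧ d z (J y) ≤ e) → r * d x y < 4 * e := by
    intro x y e he hx hy
    obtain ⟨a, ha⟩ := hF_ne x
    obtain ⟨b, hb, hab⟩ := (key x y e e e he.le he.le he (hdps x e hx) (hdps y e hy)).1 a ha
    have := hJ_exp x y
    have := hd_tri (J x) a (J y)
    have := hd_tri a b (J y)
    have := (hx a ha).1
    have := (hy b hb).2
    nlinarith
  have hseq : ∀ n : ℕ, (0 : ℝ) < 1 / ((n : ℝ) + 1) := fun n => Nat.one_div_pos_of_nat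
  choose u hu using fun n : ℕ => happ (1 / ((n : ℝ) + 1)) (hseq n)
  have hu' : ∀ ε : ℝ, 0 < ε → ∃ N : ℕ, ∀ n ≥ N, ∀ z ∈ F (u n),
      d (J (u n)) z ≤ ε ∧ d z (J (u n)) ≤ ε := by
    intro ε hε
    obtain ⟨N, hN⟩ := exists_nat_one_div_lt hε
    refine ⟨N, fun n hn z hz => ?_⟩
    have h1 := Nat.one_div_le_one_div (α := ℝ) hn
    have h2 := hu n z hz
    exact ⟨by linarith [h2.1], by linarith [h2.2]⟩
  obtain ⟨l, hl⟩ := hbicomplete u (by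
    intro ε hε
    have he : 0 < r * ε / 8 := by positivity
    obtain ⟨N, hN⟩ := hu' _ he
    refine ⟨N, fun m hm n hn => ?_⟩
    have h1 := hpair (u m) (u n) _ he (hN m hm) (hN n hn)
    have h2 := hpair (u n) (u m) _ he (hN n hn) (hN m hm)
    refine max_lt ?_ ?_
    · refine lt_of_mul_lt_mul_left (a := r) ?_ hr.le
      linarith
    · refine lt_of_mul_lt_mul_left (a := r) ?_ hr.le
      linarith)
  have hQ : ∀ ε : ℝ, 0 < ε → ∃ x, (∀ z ∈ F x, d (J x) z ≤ ε ∧ d z (J x) ≤ ε) ∧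
      d (J l) (J x) ≤ ε ∧ d (J x) (J l) ≤ ε := by
    intro ε hε
    obtain ⟨N, hN⟩ := hu' ε hε
    obtain ⟨δ, hδ, hJ⟩ := hJ_cont l ε hε
    obtain ⟨M, hM⟩ := hl δ hδ
    have h1 := hM (max N M) (le_max_right _ _)
    have h2 := hJ (u (max N M)) (by rw [symm2, max_comm]; exact h1)
    exact ⟨u (max N M), hN _ (le_max_left _ _), ((le_max_left _ _).trans_lt h2).le,
      ((le_max_right _ _).trans_lt h2).le⟩
  obtain ⟨b0, hb0⟩ := hF_ne l
  obtain ⟨D, hD0, hDeq⟩ : ∃ D : ℝ, 0 ≤ D ∧ dPS d (J l) (F l) = ENNReal.ofReal D := by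
    refine ⟨(dPS d (J l) (F l)).toReal, ENNReal.toReal_nonneg, (ENNReal.ofReal_toReal ?_).symm⟩
    exact ne_top_of_le_ne_top ENNReal.ofReal_ne_top (iInf₂_le b0 hb0)
  have hDle : ∀ b ∈ F l, D ≤ d (J l) b := by
    intro b hb
    have h : dPS d (J l) (F l) ≤ ENNReal.ofReal (d (J l) b) := iInf₂_le b hb
    rw [hDeq] at h
    exact (ENNReal.ofReal_le_ofReal_iff (hd_nonneg _ _)).1 h
  have hDz : D ≤ 0 := by
    by_contra hneg
    push Not at hneg
    have he : 0 < D / 16 := by positivity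
    obtain ⟨x, hx, h1, h2⟩ := hQ _ he
    obtain ⟨a, ha⟩ := hF_ne x
    obtain ⟨b, hb, hab⟩ := (key x l _ D _ he.le hD0 he (hdps x _ hx) hDeq.le).1 a ha
    have := hDle b hb
    have := hd_tri (J l) (J x) b
    have := hd_tri (J x) a b
    have := (hx a ha).1
    nlinarith
  have hD : D = 0 := le_antisymm hDz hD0
  have e1 : d (J l) b0 ≤ 0 := by
    refine le_of_forall_pos_le_add fun ε hε => ?_
    have he : 0 < ε / 8 := by positivity
    obtain ⟨x, hx, h1, h2⟩ := hQ _ he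
    obtain ⟨a, ha, hab⟩ := (key x l _ D _ he.le hD0 he (hdps x _ hx) hDeq.le).2 b0 hb0
    have := hd_tri (J l) (J x) b0
    have := hd_tri (J x) a b0
    have := (hx a ha).1
    subst hD
    nlinarith
  have e2 : d b0 (J l) ≤ 0 := by
    refine le_of_forall_pos_le_add fun ε hε => ?_
    have he : 0 < ε / 8 := by positivity
    obtain ⟨x, hx, h1, h2⟩ := hQ _ he
    obtain ⟨a, ha, hab⟩ := (key l x D _ _ hD0 he.le he hDeq.le (hdps x _ hx)).1 b0 hb0
    have := hd_tri b0 (J x) (J l)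
    have := hd_tri b0 a (J x)
    have := (hx a ha).2
    subst hD
    nlinarith
  have : J l = b0 := hd_T0 _ _ (le_antisymm e1 (hd_nonneg _ _)) (le_antisymm e2 (hd_nonneg _ _))
  exact ⟨l, this ▸ hb0⟩
end
end

section
/- Let (X,d) be a bicomplete T0-quasi-metric space and J : X → X a single-valued map continuous with respect to d^s such that r·d(x,y) ≤ d(Jx,Jy) for all x,y ∈ X, for some constant r > 0. Let F : X → CB(X) be a set-valued map satisfying H(Fx,Fy) ≤ α·[d(Jx,Fy) + d(Fx,Jy)] for all x,y ∈ X, where 0 < α < 1/2 and 2rα < 1. Then there exists a unique x₀ ∈ X which is both a startpoint and an endpoint of J and F (i.e. H({Jx₀},Fx₀) = 0 = H(Fx₀,{Jx₀})) if and only if J and F have the approximate mix-point property, i.e. inf_{x∈X} sup_{y∈Fx} d^s(Jx,y) = 0. -/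
open Set Filter
open scoped ENNReal

noncomputable section

theorem stmt10 {X : Type*} [Nonempty X]
    (d : X → X → ℝ)
    (hd_nonneg : ∀ x y : X, 0 ≤ d x y)
    (hd_refl : ∀ x : X, d x x = 0)
    (hd_tri : ∀ x y z : X, d x z ≤ d x y + d y z)
    (hd_T0 : ∀ x y : X, d x y = 0 → d y x = 0 → x = y)
    (hbicomplete : ∀ u : ℕ → X,
      (∀ ε : ℝ, 0 < ε → ∃ N : ℕ, ∀ m ≥ N, ∀ n ≥ N, symm2 d (u m) (u n) < ε) →
      ∃ l : X, ∀ ε : ℝ, 0 < ε → ∃ N : ℕ, ∀ n ≥ N, symm2 d (u n) l < ε)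
    (J : X → X)
    (hJ_cont : ∀ x : X, ∀ ε : ℝ, 0 < ε → ∃ δ : ℝ, 0 < δ ∧
      ∀ y : X, symm2 d x y < δ → symm2 d (J x) (J y) < ε)
    (r : ℝ) (hr : 0 < r)
    (hJ_exp : ∀ x y : X, r * d x y ≤ d (J x) (J y))
    (F : X → Set X)
    (hF_ne : ∀ x : X, (F x).Nonempty)
    (hF_bdd : ∀ x : X, ∃ M : ℝ, ∀ a ∈ F x, ∀ c ∈ F x, symm2 d a c ≤ M)
    (hF_closed : ∀ x : X, ∀ u : ℕ → X, (∀ n : ℕ, u n ∈ F x) → ∀ l : X,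
      Filter.Tendsto (fun n => symm2 d (u n) l) Filter.atTop (nhds (0 : ℝ)) → l ∈ F x)
    (α : ℝ) (hα0 : 0 < α) (hα1 : α < 1 / 2) (hrα : 2 * r * α < 1)
    (hcontr : ∀ x y : X, qH d (F x) (F y) ≤ ENNReal.ofReal α * (dPS d (J x) (F y) + dSP d (F x) (J y)))
    :
    (∃! x₀ : X, qH d {J x₀} (F x₀) = 0 ∧ qH d (F x₀) {J x₀} = 0) ↔ (⨅ x : X, ⨆ y ∈ F x, ENNReal.ofReal (symm2 d (J x) y)) = 0 := by
  have hA : ∀ x y b, b ∈ F y → ∀ a', a' ∈ F x → ∀ η : ℝ, 0 < η →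
      ∃ a ∈ F x, d a b < α * (d (J x) b + d a' (J y)) + η := by
    intro x y b hb a' ha' η hη
    have hpos : 0 ≤ α * (d (J x) b + d a' (J y)) :=
      mul_nonneg hα0.le (add_nonneg (hd_nonneg _ _) (hd_nonneg _ _))
    have h1 : (⨅ a ∈ F x, ENNReal.ofReal (d a b)) ≤
        ENNReal.ofReal (α * (d (J x) b + d a' (J y))) := by
      rw [ENNReal.ofReal_mul hα0.le, ENNReal.ofReal_add (hd_nonneg _ _) (hd_nonneg _ _)]
      refine le_trans ?_ ((hcontr x y).trans ?_)
      · exact le_trans (le_iSup₂ (f := fun b (_ : b ∈ F y) => ⨅ a ∈ F x, ENNReal.ofReal (d a b)) b hb)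
          (le_max_right _ _)
      · gcongr
        · exact iInf₂_le b hb
        · exact iInf₂_le a' ha'
    have h2 : (⨅ a ∈ F x, ENNReal.ofReal (d a b)) <
        ENNReal.ofReal (α * (d (J x) b + d a' (J y)) + η) :=
      lt_of_le_of_lt h1 ((ENNReal.ofReal_lt_ofReal_iff (by linarith)).2 (by linarith))
    simp only [iInf_lt_iff] at h2
    obtain ⟨a, ha, h⟩ := h2
    exact ⟨a, ha, (ENNReal.ofReal_lt_ofReal_iff (by linarith)).1 h⟩
  have hB : ∀ x y b, b ∈ F y → ∀ a', a' ∈ F x → ∀ η : ℝ, 0 < η →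
      ∃ a ∈ F x, d b a < α * (d (J y) a' + d b (J x)) + η := by
    intro x y b hb a' ha' η hη
    have hpos : 0 ≤ α * (d (J y) a' + d b (J x)) :=
      mul_nonneg hα0.le (add_nonneg (hd_nonneg _ _) (hd_nonneg _ _))
    have h1 : (⨅ a ∈ F x, ENNReal.ofReal (d b a)) ≤
        ENNReal.ofReal (α * (d (J y) a' + d b (J x))) := by
      rw [ENNReal.ofReal_mul hα0.le, ENNReal.ofReal_add (hd_nonneg _ _) (hd_nonneg _ _)]
      refine le_trans ?_ ((hcontr y x).trans ?_)
      · exact le_trans (le_iSup₂ (f := fun b (_ : b ∈ F y) => ⨅ a ∈ F x, ENNReal.ofReal (d b a)) b hb)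
          (le_max_left _ _)
      · gcongr
        · exact iInf₂_le a' ha'
        · exact iInf₂_le b hb
    have h2 : (⨅ a ∈ F x, ENNReal.ofReal (d b a)) <
        ENNReal.ofReal (α * (d (J y) a' + d b (J x)) + η) :=
      lt_of_le_of_lt h1 ((ENNReal.ofReal_lt_ofReal_iff (by linarith)).2 (by linarith))
    simp only [iInf_lt_iff] at h2
    obtain ⟨a, ha, h⟩ := h2
    exact ⟨a, ha, (ENNReal.ofReal_lt_ofReal_iff (by linarith)).1 h⟩
  have kA : ∀ x y e, (∀ a ∈ F x, d (J x) a ≤ e ∧ d a (J x) ≤ e) → ∀ b ∈ F y,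
      d (J x) b ≤ e + α * (d (J x) b + e + d (J x) (J y)) := by
    intro x y e he b hb
    refine le_of_forall_pos_le_add fun η hη => ?_
    obtain ⟨a', ha'⟩ := hF_ne x
    obtain ⟨a, ha, h⟩ := hA x y b hb a' ha' η hη
    have h3 : d a' (J y) ≤ e + d (J x) (J y) :=
      (hd_tri _ (J x) _).trans (by linarith [(he a' ha').2])
    have h4 := mul_le_mul_of_nonneg_left h3 hα0.le
    have h5 := hd_tri (J x) a b
    have h6 := (he a ha).1
    linarith
  have kB : ∀ x y e, (∀ a ∈ F x, d (J x) a ≤ e ∧ d a (J x) ≤ e) → ∀ b ∈ F y,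
      d b (J x) ≤ e + α * (d b (J x) + e + d (J y) (J x)) := by
    intro x y e he b hb
    refine le_of_forall_pos_le_add fun η hη => ?_
    obtain ⟨a', ha'⟩ := hF_ne x
    obtain ⟨a, ha, h⟩ := hB x y b hb a' ha' η hη
    have h3 : d (J y) a' ≤ e + d (J y) (J x) :=
      (hd_tri _ (J x) _).trans (by linarith [(he a' ha').1])
    have h4 := mul_le_mul_of_nonneg_left h3 hα0.le
    have h5 := hd_tri b a (J x)
    have h6 := (he a ha).2
    linarith
  have kC : ∀ x y e, (∀ a ∈ F x, d (J x) a ≤ e ∧ d a (J x) ≤ e) →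
      (∀ a ∈ F y, d (J y) a ≤ e ∧ d a (J y) ≤ e) → (1 - 2 * α) * r * d x y ≤ 4 * e := by
    intro x y e hx hy
    obtain ⟨b, hb⟩ := hF_ne y
    have h1 := kA x y e hx b hb
    have h2 := hd_tri (J x) b (J y)
    have h3 := (hy b hb).2
    have h4 := mul_le_mul_of_nonneg_left (hJ_exp x y) (by linarith : 0 ≤ 1 - 2 * α)
    have h5 : (1 - α) * d (J x) (J y) ≤ (1 - α) * (d (J x) b + e) :=
      mul_le_mul_of_nonneg_left (by linarith) (by linarith)
    have h6 : 0 ≤ e := (hd_nonneg _ _).trans h3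
    linarith
  have hz : ∀ x, (qH d {J x} (F x) = 0 ∧ qH d (F x) {J x} = 0) ↔
      (∀ a ∈ F x, d (J x) a ≤ 0 ∧ d a (J x) ≤ 0) := by
    intro x
    obtain ⟨c, hc⟩ := hF_ne x
    constructor
    · rintro ⟨h1, h2⟩ a ha
      simp only [qH, ← nonpos_iff_eq_zero, max_le_iff, iSup_le_iff, mem_singleton_iff,
        iInf_iInf_eq_left] at h1 h2
      exact ⟨ENNReal.ofReal_eq_zero.1 (nonpos_iff_eq_zero.1 (h1.2 a ha)),
        ENNReal.ofReal_eq_zero.1 (nonpos_iff_eq_zero.1 (h2.1 a ha))⟩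
    · intro h
      simp only [qH, ← nonpos_iff_eq_zero, max_le_iff, iSup_le_iff, mem_singleton_iff,
        iInf_iInf_eq_left]
      refine ⟨⟨?_, ?_⟩, ?_, ?_⟩
      · rintro a rfl
        exact (iInf₂_le c hc).trans (ENNReal.ofReal_eq_zero.2 (h c hc).1).le
      · exact fun a ha => (ENNReal.ofReal_eq_zero.2 (h a ha).1).le
      · exact fun a ha => (ENNReal.ofReal_eq_zero.2 (h a ha).2).le
      · rintro a rfl
        exact (iInf₂_le c hc).trans (ENNReal.ofReal_eq_zero.2 (h c hc).2).le
  simp only [hz]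
  constructor
  · rintro ⟨x, hx, -⟩
    rw [← nonpos_iff_eq_zero]
    refine (iInf_le _ x).trans (iSup₂_le fun a ha => ?_)
    exact (ENNReal.ofReal_eq_zero.2 (max_le (hx a ha).1 (hx a ha).2)).le
  · intro h0
    have hq : 0 < (1 - 2 * α) * r := mul_pos (by linarith) hr
    have hex : ∀ e : ℝ, 0 < e → ∃ x, ∀ a ∈ F x, d (J x) a ≤ e ∧ d a (J x) ≤ e := by
      intro e he
      have h1 : (⨅ x : X, ⨆ y ∈ F x, ENNReal.ofReal (symm2 d (J x) y)) < ENNReal.ofReal e := by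
        rw [h0]; exact ENNReal.ofReal_pos.2 he
      obtain ⟨x, hx⟩ := iInf_lt_iff.1 h1
      refine ⟨x, fun a ha => ?_⟩
      have h2 := (le_iSup₂ (f := fun y (_ : y ∈ F x) => ENNReal.ofReal (symm2 d (J x) y)) a ha).trans hx.le
      exact max_le_iff.1 ((ENNReal.ofReal_le_ofReal_iff he.le).1 h2)
    choose u hu using fun n : ℕ => hex (1 / ((n : ℝ) + 1)) Nat.one_div_pos_of_nat
    have hu' : ∀ e : ℝ, 0 < e → ∃ N : ℕ, ∀ n ≥ N, ∀ a ∈ F (u n),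
        d (J (u n)) a ≤ e ∧ d a (J (u n)) ≤ e := by
      intro e he
      obtain ⟨N, hN⟩ := exists_nat_one_div_lt he
      refine ⟨N, fun n hn a ha => ?_⟩
      have h1 : 1 / ((n : ℝ) + 1) ≤ 1 / ((N : ℝ) + 1) := Nat.one_div_le_one_div hn
      exact ⟨(hu n a ha).1.trans (h1.trans hN.le), (hu n a ha).2.trans (h1.trans hN.le)⟩
    obtain ⟨l, hl⟩ := hbicomplete u (by
      intro ε hε
      obtain ⟨N, hN⟩ := hu' ((1 - 2 * α) * r * ε / 8) (by positivity)
      refine ⟨N, fun m hm n hn => ?_⟩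
      have h1 := kC _ _ _ (hN m hm) (hN n hn)
      have h2 := kC _ _ _ (hN n hn) (hN m hm)
      have h3 := mul_pos hq hε
      exact max_lt (lt_of_mul_lt_mul_left (by linarith) hq.le)
        (lt_of_mul_lt_mul_left (by linarith) hq.le))
    have hlim : ∀ e : ℝ, 0 < e → ∃ x, (∀ a ∈ F x, d (J x) a ≤ e ∧ d a (J x) ≤ e) ∧
        d (J l) (J x) ≤ e ∧ d (J x) (J l) ≤ e := by
      intro e he
      obtain ⟨δ, hδ, hc⟩ := hJ_cont l e he
      obtain ⟨N, hN⟩ := hu' e he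
      obtain ⟨M, hM⟩ := hl δ hδ
      have h1 := hc (u (max N M)) (by
        have := hM (max N M) (le_max_right _ _)
        rwa [symm2, max_comm] at this)
      exact ⟨u (max N M), hN _ (le_max_left _ _), (max_lt_iff.1 h1).1.le, (max_lt_iff.1 h1).2.le⟩
    refine ⟨l, ?_, ?_⟩
    · intro b hb
      constructor
      · refine le_of_forall_pos_le_add fun t ht => ?_
        obtain ⟨x, hx, h1, h2⟩ := hlim (t / 8) (by positivity)
        have h3 := kA x l _ hx b hb
        have h4 := hd_tri (J l) (J x) b
        have h5 := hd_nonneg (J x) b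
        nlinarith
      · refine le_of_forall_pos_le_add fun t ht => ?_
        obtain ⟨x, hx, h1, h2⟩ := hlim (t / 8) (by positivity)
        have h3 := kB x l _ hx b hb
        have h4 := hd_tri b (J x) (J l)
        have h5 := hd_nonneg b (J x)
        nlinarith
    · intro y hy
      have hl0 : ∀ a ∈ F l, d (J l) a ≤ 0 ∧ d a (J l) ≤ 0 := by
        intro b hb
        constructor
        · refine le_of_forall_pos_le_add fun t ht => ?_
          obtain ⟨x, hx, h1, h2⟩ := hlim (t / 8) (by positivity)
          have h3 := kA x l _ hx b hb
          have h4 := hd_tri (J l) (J x) b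
          have h5 := hd_nonneg (J x) b
          nlinarith
        · refine le_of_forall_pos_le_add fun t ht => ?_
          obtain ⟨x, hx, h1, h2⟩ := hlim (t / 8) (by positivity)
          have h3 := kB x l _ hx b hb
          have h4 := hd_tri b (J x) (J l)
          have h5 := hd_nonneg b (J x)
          nlinarith
      have h1 := kC _ _ _ hy hl0
      have h2 := kC _ _ _ hl0 hy
      refine hd_T0 _ _ (le_antisymm ?_ (hd_nonneg _ _)) (le_antisymm ?_ (hd_nonneg _ _))
      · exact le_of_mul_le_mul_left (by linarith) hq
      · exact le_of_mul_le_mul_left (by linarith) hq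
end
end

section
/- Let (X,d,b) be a bicomplete T0-quasi-pseudometric type space and J : X → X a single-valued map continuous with respect to d^s such that r·d(x,y) ≤ d(Jx,Jy) for all x,y ∈ X, for some constant r > 0. Let F : X → CB(X) be a set-valued map satisfying H(Fx,Fy) ≤ α·[d(Jx,Fx) + d(Jy,Fy)] for all x,y ∈ X, where α ∈ (0,1/2). Then for every ε > 0, the set C_ε = { x ∈ X : sup_{y∈Fx} d^s(Jx,y) ≤ ε } has diameter δ(C_ε) = sup_{x,y∈C_ε} d^s(x,y) at most (bε/r)(1 + b + 2αb). -/
open Set Filter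
open scoped ENNReal

noncomputable section

theorem stmt15 {X : Type*} [Nonempty X]
    (d : X → X → ℝ) (b : ℝ) (hb : 1 ≤ b)
    (hd_nonneg : ∀ x y : X, 0 ≤ d x y)
    (hd_refl : ∀ x : X, d x x = 0)
    (hd_tri : ∀ x y z : X, d x z ≤ b * (d x y + d y z))
    (hd_T0 : ∀ x y : X, d x y = 0 → d y x = 0 → x = y)
    (hbicomplete : ∀ u : ℕ → X,
      (∀ ε : ℝ, 0 < ε → ∃ N : ℕ, ∀ m ≥ N, ∀ n ≥ N, symm2 d (u m) (u n) < ε) →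
      ∃ l : X, ∀ ε : ℝ, 0 < ε → ∃ N : ℕ, ∀ n ≥ N, symm2 d (u n) l < ε)
    (J : X → X)
    (hJ_cont : ∀ x : X, ∀ ε : ℝ, 0 < ε → ∃ δ : ℝ, 0 < δ ∧
      ∀ y : X, symm2 d x y < δ → symm2 d (J x) (J y) < ε)
    (r : ℝ) (hr : 0 < r)
    (hJ_exp : ∀ x y : X, r * d x y ≤ d (J x) (J y))
    (F : X → Set X)
    (hF_ne : ∀ x : X, (F x).Nonempty)
    (hF_bdd : ∀ x : X, ∃ M : ℝ, ∀ a ∈ F x, ∀ c ∈ F x, symm2 d a c ≤ M)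
    (hF_closed : ∀ x : X, ∀ u : ℕ → X, (∀ n : ℕ, u n ∈ F x) → ∀ l : X,
      Filter.Tendsto (fun n => symm2 d (u n) l) Filter.atTop (nhds (0 : ℝ)) → l ∈ F x)
    (α : ℝ) (hα0 : 0 < α) (hα1 : α < 1 / 2)
    (hcontr : ∀ x y : X, qH d (F x) (F y) ≤ ENNReal.ofReal α * (dPS d (J x) (F x) + dPS d (J y) (F y)))
    :
    ∀ ε : ℝ, 0 < ε →
      (⨆ (x : X) (_ : (⨆ y ∈ F x, ENNReal.ofReal (symm2 d (J x) y)) ≤ ENNReal.ofReal ε)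
         (z : X) (_ : (⨆ y ∈ F z, ENNReal.ofReal (symm2 d (J z) y)) ≤ ENNReal.ofReal ε),
         ENNReal.ofReal (symm2 d x z))
      ≤ ENNReal.ofReal (b * ε / r * (1 + b + 2 * α * b)) := by
  intro ε hε
  have hb0 : 0 ≤ b := by linarith
  have key : ∀ x z : X, (∀ y ∈ F x, symm2 d (J x) y ≤ ε) → (∀ y ∈ F z, symm2 d (J z) y ≤ ε) →
      d x z ≤ b * ε / r * (1 + b + 2 * α * b) := by
    intro x z hx hz
    have hP : ∀ x : X, (∀ y ∈ F x, symm2 d (J x) y ≤ ε) →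
        dPS d (J x) (F x) ≤ ENNReal.ofReal ε := by
      intro x hx
      obtain ⟨y, hy⟩ := hF_ne x
      exact (iInf₂_le y hy).trans
        (ENNReal.ofReal_le_ofReal ((le_max_left _ _).trans (hx y hy)))
    obtain ⟨y, hy⟩ := hF_ne x
    have h1 : (⨅ w ∈ F z, ENNReal.ofReal (d y w)) ≤ ENNReal.ofReal (2 * α * ε) := by
      calc (⨅ w ∈ F z, ENNReal.ofReal (d y w)) ≤ qH d (F x) (F z) :=
            (le_iSup₂ (f := fun a (_ : a ∈ F x) => ⨅ w ∈ F z, ENNReal.ofReal (d a w)) y hy).trans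
              (le_max_left _ _)
        _ ≤ _ := hcontr x z
        _ ≤ ENNReal.ofReal α * (ENNReal.ofReal ε + ENNReal.ofReal ε) := by
            gcongr
            · exact hP x hx
            · exact hP z hz
        _ = ENNReal.ofReal (2 * α * ε) := by
            rw [← ENNReal.ofReal_add hε.le hε.le, ← ENNReal.ofReal_mul hα0.le]
            congr 1
            ring
    have h2 : ∀ η : ℝ, 0 < η → d (J x) (J z) ≤ b * (ε + b * (2 * α * ε + η + ε)) := by
      intro η hη
      have hpos : 0 < 2 * α * ε + η := by positivity
      have h3 : (⨅ w ∈ F z, ENNReal.ofReal (d y w)) < ENNReal.ofReal (2 * α * ε + η) :=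
        h1.trans_lt ((ENNReal.ofReal_lt_ofReal_iff hpos).2 (by linarith))
      simp only [iInf_lt_iff] at h3
      obtain ⟨w, hw, h4⟩ := h3
      have h5 := (ENNReal.ofReal_lt_ofReal_iff hpos).1 h4
      have h6 : d (J x) y ≤ ε := (le_max_left _ _).trans (hx y hy)
      have h7 : d w (J z) ≤ ε := (le_max_right _ _).trans (hz w hw)
      calc d (J x) (J z) ≤ b * (d (J x) y + d y (J z)) := hd_tri _ _ _
        _ ≤ b * (d (J x) y + b * (d y w + d w (J z))) := by
            gcongr
            exact hd_tri _ _ _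
        _ ≤ _ := by gcongr
    have h8 : d (J x) (J z) ≤ b * (ε + b * (2 * α * ε + ε)) := by
      apply le_of_forall_pos_le_add
      intro η hη
      have hbb : 0 < b * b := by positivity
      have := h2 (η / (b * b)) (by positivity)
      have e : b * (ε + b * (2 * α * ε + η / (b * b) + ε))
          = b * (ε + b * (2 * α * ε + ε)) + η := by
        field_simp
        ring
      linarith
    have h9 : b * ε / r * (1 + b + 2 * α * b) = (b * (ε + b * (2 * α * ε + ε))) / r := by
      field_simp
      ring
    rw [h9, le_div_iff₀ hr]
    linarith [hJ_exp x z]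
  have conv : ∀ x : X, (⨆ y ∈ F x, ENNReal.ofReal (symm2 d (J x) y)) ≤ ENNReal.ofReal ε →
      ∀ y ∈ F x, symm2 d (J x) y ≤ ε := by
    intro x hx y hy
    exact (ENNReal.ofReal_le_ofReal_iff hε.le).1 (iSup₂_le_iff.1 hx y hy)
  refine iSup_le fun x => iSup_le fun hx => iSup_le fun z => iSup_le fun hz => ?_
  exact ENNReal.ofReal_le_ofReal
    (max_le (key x z (conv x hx) (conv z hz)) (key z x (conv z hz) (conv x hx)))
end
end
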